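/- Fix β > 0 and a, b > 0, and for each k ≥ 0 let α_k be B(kβ/4 + a, kβ/4 + b)-distributed if k is even and B((k−1)β/4 + a + b, (k+1)β/4)-distributed if k is odd. Then there is a constant C depending only on β, a, b such that for every k ≥ 0 and every ψ ∈ ℝ, E{|Υ(ψ, α_k)|} ≤ C (k+1)^{−1/2}, where Υ(ψ, α) = −2 Im log(1 − α e^{iψ}) (principal branch). -/

import Mathlib

/-!
Since `1 - z` lies in the right half-plane for `‖z‖ ≤ 1` and `|sin (arg (1 - z))| ≤ ‖z‖`, Jordan's
inequality gives `|Υ(ψ, z)| ≤ π ‖z‖`, so that `E|Υ(ψ, α_k)| ≤ π (E α_k²)^{1/2}` by Jensen's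
inequality. The law `B(s, t)` is that of `1 - 2Y` with `Y` a standard beta variable, and
`E (1 - 2Y)² = 1 - 4 E[Y (1 - Y)]` is a quotient of beta functions, equal to
`((s - t)² / (s + t) + 1) / (s + t + 1)`. For `α_k` the difference `s - t` takes only two values
while `s + t = k β / 2 + a + b` grows linearly in `k`, hence `E α_k² = O(1 / (k + 1))`.
-/

open MeasureTheory ProbabilityTheory Filter
open scoped Real NNReal

/-- `Υ(ψ, α) = −2 Im log(1 − α e^{iψ})` (principal branch of the logarithm). -/
noncomputable def Ups (ψ : ℝ) (z : ℂ) : ℝ :=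
  -2 * (Complex.log (1 - z * Complex.exp (ψ * Complex.I))).im

/-- The `B(s,t)` distribution on `ℝ`: supported on `(−1,1)` with density
`2^{1−s−t} Γ(s+t)/(Γ(s)Γ(t)) (1−x)^{s−1}(1+x)^{t−1}` w.r.t. Lebesgue measure. -/
noncomputable def betaDist (s t : ℝ) : Measure ℝ :=
  (volume : Measure ℝ).withDensity fun x =>
    ENNReal.ofReal (if x ∈ Set.Ioo (-1 : ℝ) 1 then
      2 ^ (1 - s - t) * Real.Gamma (s + t) / (Real.Gamma s * Real.Gamma t) *
        (1 - x) ^ (s - 1) * (1 + x) ^ (t - 1) else 0)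

/-- The distribution of the Verblunsky coefficient `α_k` in the Jacobi β-ensemble model:
`B(kβ/4 + a, kβ/4 + b)` for `k` even and `B((k−1)β/4 + a + b, (k+1)β/4)` for `k` odd. -/
noncomputable def jacobiAlphaDist (β a b : ℝ) (k : ℕ) : Measure ℝ :=
  if Even k then betaDist ((k : ℝ) * β / 4 + a) ((k : ℝ) * β / 4 + b)
  else betaDist (((k : ℝ) - 1) * β / 4 + a + b) (((k : ℝ) + 1) * β / 4)

section UnitDisc

lemma abs_im_le_norm_mul_norm_one_sub (z : ℂ) : |z.im| ≤ ‖z‖ * ‖1 - z‖ := by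
  have him : z.im = (z * (starRingEnd ℂ) (1 - z)).im := by
    simp only [Complex.mul_im, map_sub, map_one, Complex.sub_re, Complex.sub_im, Complex.conj_re,
      Complex.conj_im, Complex.one_re, Complex.one_im]
    ring
  calc |z.im| = |(z * (starRingEnd ℂ) (1 - z)).im| := by rw [← him]
    _ ≤ ‖z * (starRingEnd ℂ) (1 - z)‖ := Complex.abs_im_le_norm _
    _ = ‖z‖ * ‖1 - z‖ := by rw [norm_mul, Complex.norm_conj]

lemma abs_sin_arg_one_sub_le (z : ℂ) : |Real.sin (1 - z).arg| ≤ ‖z‖ := by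
  rw [Complex.sin_arg, abs_div, abs_norm]
  refine div_le_of_le_mul₀ (norm_nonneg _) (norm_nonneg _) ?_
  simpa using abs_im_le_norm_mul_norm_one_sub z

lemma abs_arg_one_sub_le {z : ℂ} (hz : ‖z‖ ≤ 1) : |(1 - z).arg| ≤ π / 2 * ‖z‖ := by
  have hre : 0 ≤ (1 - z).re := by simpa using (Complex.re_le_norm z).trans hz
  have jordan : 2 / π * |(1 - z).arg| ≤ ‖z‖ :=
    (Real.mul_abs_le_abs_sin (Complex.abs_arg_le_pi_div_two_iff.2 hre)).trans
      (abs_sin_arg_one_sub_le z)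
  calc |(1 - z).arg| = π / 2 * (2 / π * |(1 - z).arg|) := by field_simp
    _ ≤ π / 2 * ‖z‖ := by gcongr

lemma abs_Ups_le (ψ : ℝ) {z : ℂ} (hz : ‖z‖ ≤ 1) : |Ups ψ z| ≤ π * ‖z‖ := by
  have hnorm : ‖z * Complex.exp (ψ * Complex.I)‖ = ‖z‖ := by
    rw [norm_mul, Complex.norm_exp_ofReal_mul_I, mul_one]
  calc |Ups ψ z| = 2 * |(1 - z * Complex.exp (ψ * Complex.I)).arg| := by
        rw [Ups, Complex.log_im, abs_mul, abs_neg, abs_two]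
    _ ≤ 2 * (π / 2 * ‖z‖) := by
        gcongr
        exact (abs_arg_one_sub_le (hnorm.trans_le hz)).trans_eq (by rw [hnorm])
    _ = π * ‖z‖ := by ring

lemma measurable_Ups (ψ : ℝ) : Measurable (Ups ψ) := by
  unfold Ups
  fun_prop

end UnitDisc

section Moments

variable {Ω : Type*} [MeasurableSpace Ω] {μ : Measure Ω} [IsProbabilityMeasure μ]

lemma integral_le_sqrt_integral_sq {X : Ω → ℝ} (hX : MemLp X 2 μ) :
    ∫ ω, X ω ∂μ ≤ √(∫ ω, X ω ^ 2 ∂μ) := by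
  have hvar : 0 ≤ ∫ ω, X ω ^ 2 ∂μ - (∫ ω, X ω ∂μ) ^ 2 := by
    simpa only [variance_eq_sub hX, Pi.pow_apply] using variance_nonneg X μ
  exact Real.le_sqrt_of_sq_le (sub_nonneg.1 hvar)

lemma integral_abs_Ups_le {Z : Ω → ℂ} (hZ : AEStronglyMeasurable Z μ)
    (hZ_le : ∀ᵐ ω ∂μ, ‖Z ω‖ ≤ 1) (ψ : ℝ) :
    ∫ ω, |Ups ψ (Z ω)| ∂μ ≤ π * √(∫ ω, ‖Z ω‖ ^ 2 ∂μ) := by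
  have hLp : MemLp (fun ω ↦ ‖Z ω‖) 2 μ := (MemLp.of_bound hZ 1 hZ_le).norm
  calc ∫ ω, |Ups ψ (Z ω)| ∂μ ≤ ∫ ω, π * ‖Z ω‖ ∂μ := by
        refine integral_mono_of_nonneg (.of_forall fun _ ↦ abs_nonneg _)
          ((hLp.integrable one_le_two).const_mul π) ?_
        filter_upwards [hZ_le] with ω hω using abs_Ups_le ψ hω
    _ = π * ∫ ω, ‖Z ω‖ ∂μ := integral_const_mul _ _
    _ ≤ π * √(∫ ω, ‖Z ω‖ ^ 2 ∂μ) := by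
        gcongr
        exact integral_le_sqrt_integral_sq hLp

end Moments

section BetaMeasure

variable {s t : ℝ}

lemma betaPDFReal_nonneg (hs : 0 < s) (ht : 0 < t) (x : ℝ) : 0 ≤ betaPDFReal s t x := by
  by_cases hx : 0 < x ∧ x < 1
  · exact (betaPDFReal_pos hx.1 hx.2 hs ht).le
  · rw [betaPDFReal, if_neg hx]

lemma integral_betaPDFReal_eq_one (hs : 0 < s) (ht : 0 < t) : ∫ x, betaPDFReal s t x = 1 := by
  rw [integral_eq_lintegral_of_nonneg_ae (.of_forall (betaPDFReal_nonneg hs ht)) (by fun_prop)]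
  exact (ENNReal.toReal_eq_one_iff _).2 (lintegral_betaPDF_eq_one hs ht)

lemma ae_mem_Ioo_betaMeasure (s t : ℝ) : ∀ᵐ x ∂betaMeasure s t, x ∈ Set.Ioo (0 : ℝ) 1 := by
  have hpdf : Measurable (betaPDF s t) := (measurable_betaPDFReal s t).ennreal_ofReal
  rw [betaMeasure, ae_withDensity_iff hpdf]
  refine .of_forall fun x hx ↦ ⟨?_, ?_⟩ <;> contrapose! hx
  · exact betaPDF_eq_zero_of_nonpos hx
  · exact betaPDF_eq_zero_of_one_le hx

lemma betaPDFReal_mul_rpow_mul_rpow (hs : 0 < s) (ht : 0 < t) {p q : ℝ} (hp : 0 < s + p)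
    (hq : 0 < t + q) (x : ℝ) :
    betaPDFReal s t x * (x ^ p * (1 - x) ^ q) =
      beta (s + p) (t + q) / beta s t * betaPDFReal (s + p) (t + q) x := by
  unfold betaPDFReal
  split_ifs with hx
  · rw [show s + p - 1 = s - 1 + p by ring, show t + q - 1 = t - 1 + q by ring,
      Real.rpow_add hx.1, Real.rpow_add (sub_pos.2 hx.2)]
    have := beta_pos hs ht
    have := beta_pos hp hq
    field_simp
  · simp only [zero_mul, mul_zero]

lemma integral_rpow_mul_rpow_betaMeasure (hs : 0 < s) (ht : 0 < t) {p q : ℝ} (hp : 0 < s + p)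
    (hq : 0 < t + q) :
    ∫ x, x ^ p * (1 - x) ^ q ∂betaMeasure s t = beta (s + p) (t + q) / beta s t := by
  unfold betaMeasure betaPDF
  rw [integral_withDensity_eq_integral_toReal_smul (by fun_prop)
    (.of_forall fun _ ↦ ENNReal.ofReal_lt_top)]
  simp_rw [ENNReal.toReal_ofReal (betaPDFReal_nonneg hs ht _), smul_eq_mul,
    betaPDFReal_mul_rpow_mul_rpow hs ht hp hq]
  rw [integral_const_mul, integral_betaPDFReal_eq_one hp hq, mul_one]

lemma beta_add_one_add_one (hs : 0 < s) (ht : 0 < t) :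
    beta (s + 1) (t + 1) = s * t / ((s + t) * (s + t + 1)) * beta s t := by
  have hst : 0 < s + t := add_pos hs ht
  have := Real.Gamma_pos_of_pos hst
  unfold beta
  rw [show s + 1 + (t + 1) = s + t + 1 + 1 by ring, Real.Gamma_add_one hs.ne',
    Real.Gamma_add_one ht.ne', Real.Gamma_add_one (by positivity), Real.Gamma_add_one hst.ne']
  field_simp

lemma integral_mul_one_sub_betaMeasure (hs : 0 < s) (ht : 0 < t) :
    ∫ x, x * (1 - x) ∂betaMeasure s t = s * t / ((s + t) * (s + t + 1)) := by
  have h := integral_rpow_mul_rpow_betaMeasure hs ht (p := 1) (q := 1) (by positivity)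
    (by positivity)
  simp only [Real.rpow_one] at h
  rw [h, beta_add_one_add_one hs ht, mul_div_cancel_right₀ _ (beta_pos hs ht).ne']

end BetaMeasure

section BetaDist

lemma withDensity_map {X Y : Type*} [MeasurableSpace X] [MeasurableSpace Y] (μ : Measure X)
    {g : X → Y} (hg : Measurable g) {f : Y → ENNReal} (hf : Measurable f) :
    (μ.map g).withDensity f = (μ.withDensity (f ∘ g)).map g := by
  ext u hu
  rw [withDensity_apply _ hu, Measure.map_apply hg hu, withDensity_apply _ (hg hu),
    setLIntegral_map hu hf hg, Function.comp_def]

lemma ofReal_abs_smul_map_volume_sub_mul {c : ℝ} (hc : c ≠ 0) (d : ℝ) :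
    ENNReal.ofReal |c| • (volume : Measure ℝ).map (fun x ↦ d - c * x) = volume := by
  rw [show (fun x ↦ d - c * x) = (d - ·) ∘ (c * ·) from rfl,
    ← Measure.map_map (by fun_prop) (by fun_prop), ← Measure.map_smul,
    Real.smul_map_volume_mul_left hc, Measure.map_sub_left_eq_self]

variable {s t : ℝ}

/-- The real-valued density of `B(s, t)`, the integrand in the definition of `betaDist`. As there,
it is set to `0` outside `(-1, 1)`. -/
noncomputable def betaDistPDFReal (s t x : ℝ) : ℝ :=
  if x ∈ Set.Ioo (-1 : ℝ) 1 then
    2 ^ (1 - s - t) * Real.Gamma (s + t) / (Real.Gamma s * Real.Gamma t) *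
      (1 - x) ^ (s - 1) * (1 + x) ^ (t - 1) else 0

lemma measurable_betaDistPDFReal (s t : ℝ) : Measurable (betaDistPDFReal s t) :=
  Measurable.ite measurableSet_Ioo (by fun_prop) measurable_const

lemma betaDist_eq_withDensity (s t : ℝ) :
    betaDist s t = volume.withDensity fun x ↦ ENNReal.ofReal (betaDistPDFReal s t x) := rfl

lemma two_mul_betaDistPDFReal_one_sub_two_mul (s t x : ℝ) :
    2 * betaDistPDFReal s t (1 - 2 * x) = betaPDFReal s t x := by
  have hmem : 1 - 2 * x ∈ Set.Ioo (-1 : ℝ) 1 ↔ 0 < x ∧ x < 1 := by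
    constructor <;> rintro ⟨h₁, h₂⟩ <;> constructor <;> linarith
  simp only [betaDistPDFReal, hmem, betaPDFReal, beta]
  split_ifs with hx
  · have hpow : (2 : ℝ) ^ (1 - s - t) * 2 ^ (s - 1) * 2 ^ (t - 1) * 2 = 1 := by
      rw [← Real.rpow_add two_pos, ← Real.rpow_add two_pos, ← Real.rpow_add_one two_ne_zero,
        show 1 - s - t + (s - 1) + (t - 1) + 1 = 0 by ring, Real.rpow_zero]
    rw [show 1 - (1 - 2 * x) = 2 * x by ring, show 1 + (1 - 2 * x) = 2 * (1 - x) by ring,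
      Real.mul_rpow zero_le_two hx.1.le, Real.mul_rpow zero_le_two (sub_pos.2 hx.2).le,
      one_div_div]
    linear_combination Real.Gamma (s + t) / (Real.Gamma s * Real.Gamma t) * x ^ (s - 1) *
      (1 - x) ^ (t - 1) * hpow
  · exact mul_zero _

lemma betaDist_eq_map_betaMeasure (s t : ℝ) :
    betaDist s t = (betaMeasure s t).map (fun x ↦ 1 - 2 * x) := by
  have hmeas : Measurable fun x ↦ ENNReal.ofReal (betaDistPDFReal s t x) :=
    (measurable_betaDistPDFReal s t).ennreal_ofReal
  have hpdf : betaPDF s t =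
      (2 : ENNReal) • ((fun x ↦ ENNReal.ofReal (betaDistPDFReal s t x)) ∘ fun x ↦ 1 - 2 * x) := by
    funext x
    rw [betaPDF, ← two_mul_betaDistPDFReal_one_sub_two_mul, ENNReal.ofReal_mul zero_le_two,
      ENNReal.ofReal_ofNat]
    rfl
  have hvol : (2 : ENNReal) • (volume : Measure ℝ).map (fun x ↦ 1 - 2 * x) = volume := by
    simpa using ofReal_abs_smul_map_volume_sub_mul two_ne_zero 1
  rw [betaMeasure, hpdf, withDensity_smul _ (hmeas.comp (by fun_prop)), Measure.map_smul,
    ← withDensity_map _ (by fun_prop) hmeas, ← withDensity_smul_measure, hvol,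
    betaDist_eq_withDensity]

lemma isProbabilityMeasure_betaDist (hs : 0 < s) (ht : 0 < t) :
    IsProbabilityMeasure (betaDist s t) := by
  have := isProbabilityMeasureBeta hs ht
  rw [betaDist_eq_map_betaMeasure]
  exact Measure.isProbabilityMeasure_map (by fun_prop)

lemma ae_abs_lt_one_betaDist (s t : ℝ) : ∀ᵐ x ∂betaDist s t, |x| < 1 := by
  rw [betaDist_eq_map_betaMeasure,
    ae_map_iff (by fun_prop) (measurableSet_lt (by fun_prop) (by fun_prop))]
  filter_upwards [ae_mem_Ioo_betaMeasure s t] with x hx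
  rw [abs_lt]
  constructor <;> linarith [hx.1, hx.2]

lemma integral_sq_betaDist (hs : 0 < s) (ht : 0 < t) :
    ∫ x, x ^ 2 ∂betaDist s t = ((s - t) ^ 2 / (s + t) + 1) / (s + t + 1) := by
  have := isProbabilityMeasureBeta hs ht
  have hint : Integrable (fun x ↦ x * (1 - x)) (betaMeasure s t) := by
    refine .of_integral_ne_zero ?_
    rw [integral_mul_one_sub_betaMeasure hs ht]
    positivity
  calc ∫ x, x ^ 2 ∂betaDist s t = ∫ x, (1 - 2 * x) ^ 2 ∂betaMeasure s t := by
        rw [betaDist_eq_map_betaMeasure, integral_map (by fun_prop) (by fun_prop)]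
    _ = ∫ x, (1 - 4 * (x * (1 - x))) ∂betaMeasure s t := by
        congr with x
        ring
    _ = 1 - 4 * (s * t / ((s + t) * (s + t + 1))) := by
        rw [integral_sub (integrable_const _) (hint.const_mul 4), integral_const_mul,
          integral_mul_one_sub_betaMeasure hs ht, integral_const, probReal_univ, one_smul]
    _ = ((s - t) ^ 2 / (s + t) + 1) / (s + t + 1) := by
        field_simp
        ring

lemma integral_abs_Ups_betaDist_le (hs : 0 < s) (ht : 0 < t) (ψ : ℝ) :
    ∫ x, |Ups ψ (x : ℂ)| ∂betaDist s t ≤ π * √(∫ x, x ^ 2 ∂betaDist s t) := by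
  have := isProbabilityMeasure_betaDist hs ht
  have hle : ∀ᵐ (x : ℝ) ∂betaDist s t, ‖(x : ℂ)‖ ≤ 1 := by
    filter_upwards [ae_abs_lt_one_betaDist s t] with x hx
    simpa using hx.le
  simpa using integral_abs_Ups_le (Z := fun x : ℝ ↦ (x : ℂ))
    Complex.continuous_ofReal.aestronglyMeasurable hle ψ

end BetaDist

section Jacobi

variable {β a b : ℝ}

lemma exists_jacobiAlphaDist_eq_betaDist (hβ : 0 < β) (ha : 0 < a) (hb : 0 < b) (k : ℕ) :
    ∃ s t : ℝ, 0 < s ∧ 0 < t ∧ s + t = k * β / 2 + (a + b) ∧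
      (s - t = a - b ∨ s - t = a + b - β / 2) ∧ jacobiAlphaDist β a b k = betaDist s t := by
  unfold jacobiAlphaDist
  by_cases hk : Even k
  · exact ⟨_, _, by positivity, by positivity, by ring, .inl (by ring), if_pos hk⟩
  · have hk_one : (0 : ℝ) ≤ k - 1 :=
      sub_nonneg.2 (Nat.one_le_cast.2 (Nat.not_even_iff_odd.1 hk).pos)
    exact ⟨_, _, by positivity, by positivity, by ring, .inr (by ring), if_neg hk⟩

lemma exists_integral_sq_jacobiAlphaDist_le (hβ : 0 < β) (ha : 0 < a) (hb : 0 < b) :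
    ∃ M : ℝ, ∀ k : ℕ, ∫ x, x ^ 2 ∂jacobiAlphaDist β a b k ≤ M / (k + 1) := by
  set c := min (β / 2) (a + b)
  set D := max ((a - b) ^ 2) ((a + b - β / 2) ^ 2)
  have : 0 < c := lt_min (by positivity) (by positivity)
  refine ⟨(D / (a + b) + 1) / c, fun k ↦ ?_⟩
  obtain ⟨s, t, hs, ht, hsum, hdiff, hlaw⟩ := exists_jacobiAlphaDist_eq_betaDist hβ ha hb k
  have hD : (s - t) ^ 2 ≤ D := by
    rcases hdiff with h | h <;> rw [h]
    exacts [le_max_left _ _, le_max_right _ _]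
  have hsum_ge : a + b ≤ s + t := by
    rw [hsum]
    exact le_add_of_nonneg_left (by positivity)
  have hgrowth : c * (k + 1) ≤ s + t + 1 := by
    calc c * (k + 1) = k * c + c := by ring
      _ ≤ k * (β / 2) + (a + b) := by
          gcongr
          exacts [min_le_left _ _, min_le_right _ _]
      _ ≤ s + t + 1 := by linarith
  calc ∫ x, x ^ 2 ∂jacobiAlphaDist β a b k = ((s - t) ^ 2 / (s + t) + 1) / (s + t + 1) := by
        rw [hlaw, integral_sq_betaDist hs ht]
    _ ≤ (D / (a + b) + 1) / (c * (k + 1)) := by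
        gcongr
    _ = (D / (a + b) + 1) / c / (k + 1) := (div_div _ _ _).symm

theorem beta_Ups_first_moment_le_general (hβ : 0 < β) (ha : 0 < a) (hb : 0 < b) :
    ∃ C : ℝ, ∀ (k : ℕ) (ψ : ℝ),
      ∫ x, |Ups ψ (x : ℂ)| ∂jacobiAlphaDist β a b k ≤ C / √((k : ℝ) + 1) := by
  obtain ⟨M, hM⟩ := exists_integral_sq_jacobiAlphaDist_le hβ ha hb
  refine ⟨π * √M, fun k ψ ↦ ?_⟩
  calc ∫ x, |Ups ψ (x : ℂ)| ∂jacobiAlphaDist β a b k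
      ≤ π * √(∫ x, x ^ 2 ∂jacobiAlphaDist β a b k) := by
        obtain ⟨s, t, hs, ht, -, -, hlaw⟩ := exists_jacobiAlphaDist_eq_betaDist hβ ha hb k
        rw [hlaw]
        exact integral_abs_Ups_betaDist_le hs ht ψ
    _ ≤ π * √(M / (k + 1)) := by
        gcongr
        exact hM k
    _ = π * √M / √((k : ℝ) + 1) := by
        rw [Real.sqrt_div' _ (by positivity), mul_div_assoc]

end Jacobi

/-- there is `C = C(β,a,b)` such that if `α_k` has the Jacobi-`β`-ensemble
Verblunsky law, then `E{|Υ(ψ,α_k)|} ≤ C (k+1)^{−1/2}`. -/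
theorem beta_Ups_first_moment_le {Ω : Type*} [MeasurableSpace Ω] (μ : Measure Ω)
    [IsProbabilityMeasure μ] (β a b : ℝ) (hβ : 0 < β) (ha : 0 < a) (hb : 0 < b)
    (α : ℕ → Ω → ℝ) (hα : ∀ k, Measurable (α k))
    (hlaw : ∀ k, Measure.map (α k) μ = jacobiAlphaDist β a b k) :
    ∃ C : ℝ, ∀ (k : ℕ) (ψ : ℝ),
      ∫ ω, |Ups ψ (α k ω)| ∂μ ≤ C / Real.sqrt ((k : ℝ) + 1) := by
  obtain ⟨C, hC⟩ := beta_Ups_first_moment_le_general hβ ha hb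
  refine ⟨C, fun k ψ ↦ ?_⟩
  have hUps : Measurable fun x : ℝ ↦ |Ups ψ (x : ℂ)| :=
    ((measurable_Ups ψ).comp Complex.measurable_ofReal).abs
  rw [← integral_map (hα k).aemeasurable hUps.aestronglyMeasurable, hlaw k]
  exact hC k ψ
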